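/- Let X_1, …, X_n be upper extended negatively dependent random variables in a sub-linear expectation space with dominating constant K ≥ 1 and 𝔼[X_k] ≤ 0 for each k. Set S_n = Σ_{k=1}^n X_k and B_n = Σ_{k=1}^n 𝔼[X_k²]. Then for all x > 0: 𝕍(S_n ≥ x) ≤ (1 + K·e)·B_n/x². -/

import Mathlib

open Filter MeasureTheory
open scoped ENNReal NNReal

noncomputable section

/-- A sub-linear expectation on `Ω`: a monotone, constant-preserving, sub-additive,
positively homogeneous functional on real random variables (with values in the
extended reals, so that random variables without a finite expectation are allowed). -/
structure SublinearExp (Ω : Type) where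
  E : (Ω → ℝ) → EReal
  mono : ∀ X Y : Ω → ℝ, (∀ ω, X ω ≤ Y ω) → E X ≤ E Y
  const_eq : ∀ c : ℝ, E (fun _ => c) = (c : EReal)
  subadd : ∀ X Y : Ω → ℝ, E (fun ω => X ω + Y ω) ≤ E X + E Y
  pos_homog : ∀ lam : ℝ, 0 ≤ lam → ∀ X : Ω → ℝ,
    E (fun ω => lam * X ω) = (lam : EReal) * E X

namespace SublinearExp

variable {Ω : Type}

/-- The conjugate expectation `ℰ[X] := −𝔼[−X]`. -/
def cE (SL : SublinearExp Ω) (X : Ω → ℝ) : EReal := - SL.E fun ω => - X ω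

/-- The upper capacity `𝕍(A) := inf{𝔼[ξ] : 1_A ≤ ξ}`. -/
def V (SL : SublinearExp Ω) (A : Set Ω) : ℝ :=
  sInf {x : ℝ | ∃ ξ : Ω → ℝ,
    (∀ ω, A.indicator (fun _ => (1 : ℝ)) ω ≤ ξ ω) ∧ SL.E ξ = (x : EReal)}

/-- The lower capacity `𝓋(A) := 1 − 𝕍(Aᶜ)`. -/
def vLow (SL : SublinearExp Ω) (A : Set Ω) : ℝ := 1 - SL.V Aᶜ

/-- The Choquet integral `C_𝕍(X) := ∫₀^∞ 𝕍(X ≥ t) dt` (of a non-negative r.v.). -/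
def Choquet (SL : SublinearExp Ω) (X : Ω → ℝ) : ℝ≥0∞ :=
  ∫⁻ t in Set.Ioi (0 : ℝ), ENNReal.ofReal (SL.V {ω | t ≤ X ω})

/-- The outer capacity `𝕍*(A) := inf{Σ_n 𝕍(A_n) : A ⊆ ∪_n A_n}`. -/
def Vout (SL : SublinearExp Ω) (A : Set Ω) : ℝ≥0∞ :=
  ⨅ (B : ℕ → Set Ω) (_ : A ⊆ ⋃ n, B n), ∑' n, ENNReal.ofReal (SL.V (B n))

/-- The upper capacity is continuous: continuous from below and from above. -/
def ContinuousCapacity (SL : SublinearExp Ω) : Prop :=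
  (∀ A : ℕ → Set Ω, Monotone A →
    Tendsto (fun n => SL.V (A n)) atTop (nhds (SL.V (⋃ n, A n)))) ∧
  (∀ A : ℕ → Set Ω, Antitone A →
    Tendsto (fun n => SL.V (A n)) atTop (nhds (SL.V (⋂ n, A n))))

/-- Bounded Lipschitz function on ℝ. -/
def IsBLip (g : ℝ → ℝ) : Prop :=
  (∃ L : NNReal, LipschitzWith L g) ∧ ∃ M : ℝ, ∀ x, |g x| ≤ M

/-- Local Lipschitz function on ℝ: `|φ(x) − φ(y)| ≤ C(1+|x|^m+|y|^m)|x−y|`. -/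
def IsLocLip (φ : ℝ → ℝ) : Prop :=
  ∃ (C : ℝ) (m : ℕ), ∀ x y : ℝ, |φ x - φ y| ≤ C * (1 + |x| ^ m + |y| ^ m) * |x - y|

/-- Upper extended negative dependence (finite family) with dominating constant `K`:
`𝔼[∏ g_i(X_i)] ≤ K ∏ 𝔼[g_i(X_i)]` for all non-negative bounded Lipschitz
non-decreasing `g_i`.  (Expectations of bounded functions are finite, whence
the `toReal`.) -/
def UENDFin (SL : SublinearExp Ω) (K : ℝ) {n : ℕ} (X : Fin n → Ω → ℝ) : Prop :=
  ∀ g : Fin n → ℝ → ℝ, (∀ i, IsBLip (g i)) → (∀ i, Monotone (g i)) →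
    (∀ i x, 0 ≤ g i x) →
    SL.E (fun ω => ∏ i, g i (X i ω)) ≤
      ((K * ∏ i, (SL.E fun ω => g i (X i ω)).toReal : ℝ) : EReal)

/-- Upper extended negative dependence for a sequence. -/
def UEND (SL : SublinearExp Ω) (K : ℝ) (X : ℕ → Ω → ℝ) : Prop :=
  ∀ n : ℕ, ∀ g : ℕ → ℝ → ℝ, (∀ i, IsBLip (g i)) → (∀ i, Monotone (g i)) →
    (∀ i x, 0 ≤ g i x) →
    SL.E (fun ω => ∏ i ∈ Finset.range n, g i (X i ω)) ≤
      ((K * ∏ i ∈ Finset.range n, (SL.E fun ω => g i (X i ω)).toReal : ℝ) : EReal)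

/-- Lower extended negative dependence for a sequence. -/
def LEND (SL : SublinearExp Ω) (K : ℝ) (X : ℕ → Ω → ℝ) : Prop :=
  ∀ n : ℕ, ∀ g : ℕ → ℝ → ℝ, (∀ i, IsBLip (g i)) → (∀ i, Antitone (g i)) →
    (∀ i x, 0 ≤ g i x) →
    SL.E (fun ω => ∏ i ∈ Finset.range n, g i (X i ω)) ≤
      ((K * ∏ i ∈ Finset.range n, (SL.E fun ω => g i (X i ω)).toReal : ℝ) : EReal)

/-- Extended negative dependence = upper and lower END. -/
def END (SL : SublinearExp Ω) (K : ℝ) (X : ℕ → Ω → ℝ) : Prop :=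
  UEND SL K X ∧ LEND SL K X

/-- Upper extended negative dependence under the conjugate expectation `ℰ`
(finite family). -/
def UENDFinConj (SL : SublinearExp Ω) (K : ℝ) {n : ℕ} (X : Fin n → Ω → ℝ) : Prop :=
  ∀ g : Fin n → ℝ → ℝ, (∀ i, IsBLip (g i)) → (∀ i, Monotone (g i)) →
    (∀ i x, 0 ≤ g i x) →
    SL.cE (fun ω => ∏ i, g i (X i ω)) ≤
      ((K * ∏ i, (SL.cE fun ω => g i (X i ω)).toReal : ℝ) : EReal)

/-- Upper extended negative dependence under the conjugate expectation (sequence). -/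
def UENDconj (SL : SublinearExp Ω) (K : ℝ) (X : ℕ → Ω → ℝ) : Prop :=
  ∀ n : ℕ, ∀ g : ℕ → ℝ → ℝ, (∀ i, IsBLip (g i)) → (∀ i, Monotone (g i)) →
    (∀ i x, 0 ≤ g i x) →
    SL.cE (fun ω => ∏ i ∈ Finset.range n, g i (X i ω)) ≤
      ((K * ∏ i ∈ Finset.range n, (SL.cE fun ω => g i (X i ω)).toReal : ℝ) : EReal)

/-- Lower extended negative dependence under the conjugate expectation (sequence). -/
def LENDconj (SL : SublinearExp Ω) (K : ℝ) (X : ℕ → Ω → ℝ) : Prop :=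
  ∀ n : ℕ, ∀ g : ℕ → ℝ → ℝ, (∀ i, IsBLip (g i)) → (∀ i, Antitone (g i)) →
    (∀ i x, 0 ≤ g i x) →
    SL.cE (fun ω => ∏ i ∈ Finset.range n, g i (X i ω)) ≤
      ((K * ∏ i ∈ Finset.range n, (SL.cE fun ω => g i (X i ω)).toReal : ℝ) : EReal)

/-- Extended negative dependence under the conjugate expectation. -/
def ENDconj (SL : SublinearExp Ω) (K : ℝ) (X : ℕ → Ω → ℝ) : Prop :=
  UENDconj SL K X ∧ LENDconj SL K X

/-- Extended independence of a sequence: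
`𝔼[∏ ψ_i(X_i)] = ∏ 𝔼[ψ_i(X_i)]` for non-negative local Lipschitz `ψ_i`,
whenever the expectations involved are finite. -/
def ExtIndep (SL : SublinearExp Ω) (X : ℕ → Ω → ℝ) : Prop :=
  ∀ n : ℕ, ∀ ψ : ℕ → ℝ → ℝ, (∀ i, IsLocLip (ψ i)) → (∀ i x, 0 ≤ ψ i x) →
    (∀ i ∈ Finset.range n, SL.E (fun ω => ψ i (X i ω)) ≠ ⊤) →
    SL.E (fun ω => ∏ i ∈ Finset.range n, ψ i (X i ω)) =
      ((∏ i ∈ Finset.range n, (SL.E fun ω => ψ i (X i ω)).toReal : ℝ) : EReal)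

/-- Extended independence of two random variables. -/
def ExtIndepPair (SL : SublinearExp Ω) (Y Z : Ω → ℝ) : Prop :=
  ∀ ψ₁ ψ₂ : ℝ → ℝ, IsLocLip ψ₁ → IsLocLip ψ₂ →
    (∀ x, 0 ≤ ψ₁ x) → (∀ x, 0 ≤ ψ₂ x) →
    SL.E (fun ω => ψ₁ (Y ω)) ≠ ⊤ → SL.E (fun ω => ψ₂ (Z ω)) ≠ ⊤ →
    SL.E (fun ω => ψ₁ (Y ω) * ψ₂ (Z ω)) =
      (((SL.E fun ω => ψ₁ (Y ω)).toReal * (SL.E fun ω => ψ₂ (Z ω)).toReal : ℝ) : EReal)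

/-- Identically distributed: `𝔼[φ(X_i)] = 𝔼[φ(X_1)]` for all local Lipschitz `φ`. -/
def IdentDist (SL : SublinearExp Ω) (X : ℕ → Ω → ℝ) : Prop :=
  ∀ (i : ℕ) (φ : ℝ → ℝ), IsLocLip φ →
    SL.E (fun ω => φ (X i ω)) = SL.E fun ω => φ (X 0 ω)

end SublinearExp

/-- `log x = ln(x ∨ e)`. -/
def paperLog (x : ℝ) : ℝ := Real.log (max x (Real.exp 1))

/-- `a_n = √(2 n log log n)` with the above convention for `log`. -/
def lilA (n : ℕ) : ℝ := Real.sqrt (2 * n * paperLog (paperLog n))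

/-- A quadratic upper bound for `exp` on a half-line `(-∞, a]`. -/
theorem exp_le_one_add_add_sq {a y : ℝ} (ha : 0 < a) (hy : y ≤ a) :
    Real.exp y ≤ 1 + y + (Real.exp a - 1) / a ^ 2 * y ^ 2 := by
  have ha2 : 0 < a ^ 2 := by positivity
  rcases le_total y 0 with h0 | h0
  · have hz := Real.quadratic_le_exp_of_nonneg (neg_nonneg.2 h0)
    have hmul : Real.exp y * Real.exp (-y) = 1 := by rw [← Real.exp_add]; simp
    have hq : Real.exp y ≤ 1 + y + y ^ 2 / 2 := by
      nlinarith [mul_le_mul_of_nonneg_left hz (Real.exp_pos y).le, Real.exp_pos y,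
        sq_nonneg (y ^ 2), mul_nonneg (Real.exp_pos y).le (sq_nonneg (y ^ 2)),
        Real.exp_le_one_iff.2 h0]
    have hc : 1 / 2 ≤ (Real.exp a - 1) / a ^ 2 := by
      rw [le_div_iff₀ ha2]
      linarith [Real.quadratic_le_exp_of_nonneg ha.le]
    nlinarith [mul_le_mul_of_nonneg_right hc (sq_nonneg y)]
  · have hs : ∀ z : ℝ, HasSum (fun m : ℕ => z ^ (m + 2) / ((m + 2).factorial : ℝ))
        (Real.exp z - 1 - z) := by
      intro z
      have h := NormedSpace.expSeries_div_hasSum_exp z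
      rw [← Real.exp_eq_exp_ℝ] at h
      rw [hasSum_nat_add_iff (f := fun m : ℕ => z ^ m / (m.factorial : ℝ)) 2]
      simpa [Finset.sum_range_succ, sub_sub] using h
    have hle : Real.exp y - 1 - y ≤ y ^ 2 / a ^ 2 * (Real.exp a - 1 - a) := by
      refine hasSum_le (fun m => ?_) (hs y) ((hs a).mul_left _)
      have hp : y ^ m ≤ a ^ m := pow_le_pow_left₀ h0 hy m
      have he : y ^ 2 / a ^ 2 * (a ^ (m + 2) / ((m + 2).factorial : ℝ))
          = y ^ 2 * a ^ m / ((m + 2).factorial : ℝ) := by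
        field_simp
        ring
      rw [he, pow_add, mul_comm (y ^ m)]
      gcongr
    have hpos : 0 ≤ y ^ 2 / a ^ 2 * a := by positivity
    have he : (Real.exp a - 1) / a ^ 2 * y ^ 2 = y ^ 2 / a ^ 2 * (Real.exp a - 1) := by ring
    rw [he]
    linarith [mul_sub (y ^ 2 / a ^ 2) (Real.exp a - 1) a]

/-- The truncated exponential is bounded and Lipschitz. -/
theorem isBLip_exp_mul_min {t x : ℝ} (ht : 0 ≤ t) :
    SublinearExp.IsBLip fun u => Real.exp (t * min u x) := by
  have hbd : ∀ u, Real.exp (t * min u x) ≤ Real.exp (t * x) := fun u =>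
    Real.exp_le_exp.2 (mul_le_mul_of_nonneg_left (min_le_right u x) ht)
  refine ⟨⟨(Real.exp (t * x) * t).toNNReal, LipschitzWith.of_le_add_mul _ fun u v => ?_⟩,
    Real.exp (t * x), fun u => by rw [abs_of_pos (Real.exp_pos _)]; exact hbd u⟩
  rw [Real.coe_toNNReal _ (by positivity), Real.dist_eq]
  set p := t * min u x with hp
  set q := t * min v x with hq
  have hpq : p - q ≤ t * |u - v| := by
    rw [hp, hq, ← mul_sub]
    refine mul_le_mul_of_nonneg_left ((le_abs_self _).trans ?_) ht
    simpa using abs_min_sub_min_le_max u x v x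
  have hexp : Real.exp p - Real.exp q ≤ Real.exp p * (p - q) := by
    have h := Real.add_one_le_exp (q - p)
    have he : Real.exp q = Real.exp p * Real.exp (q - p) := by rw [← Real.exp_add]; ring_nf
    rw [he]
    nlinarith [Real.exp_pos p]
  have h1 : Real.exp p * (p - q) ≤ Real.exp p * (t * |u - v|) :=
    mul_le_mul_of_nonneg_left hpq (Real.exp_pos p).le
  have h2 : Real.exp p * (t * |u - v|) ≤ Real.exp (t * x) * (t * |u - v|) :=
    mul_le_mul_of_nonneg_right (hbd u) (by positivity)
  linarith

namespace SublinearExp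

variable {Ω : Type}

theorem coe_finset_sum {ι : Type*} (s : Finset ι) (f : ι → ℝ) :
    ((∑ k ∈ s, f k : ℝ) : EReal) = ∑ k ∈ s, (f k : EReal) :=
  map_sum (⟨⟨Real.toEReal, EReal.coe_zero⟩, EReal.coe_add⟩ : ℝ →+ EReal) f s

theorem E_nonneg (SL : SublinearExp Ω) {f : Ω → ℝ} (hf : ∀ ω, 0 ≤ f ω) : 0 ≤ SL.E f := by
  simpa [SL.const_eq] using SL.mono (fun _ => 0) f hf

theorem E_sum_le (SL : SublinearExp Ω) {ι : Type*} (s : Finset ι) (f : ι → Ω → ℝ) :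
    SL.E (fun ω => ∑ k ∈ s, f k ω) ≤ ∑ k ∈ s, SL.E (f k) := by
  classical
  induction s using Finset.induction_on with
  | empty => simpa using (SL.const_eq 0).le
  | insert a s ha ih =>
    simp only [Finset.sum_insert ha]
    exact (SL.subadd _ _).trans (add_le_add le_rfl ih)

theorem V_le (SL : SublinearExp Ω) {A : Set Ω} {ξ : Ω → ℝ} {c : ℝ}
    (hξ : ∀ ω, A.indicator (fun _ => (1 : ℝ)) ω ≤ ξ ω) (hc : SL.E ξ ≤ c) : SL.V A ≤ c := by
  have hnn : ∀ η : Ω → ℝ, (∀ ω, A.indicator (fun _ => (1 : ℝ)) ω ≤ η ω) → 0 ≤ SL.E η :=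
    fun η hη => SL.E_nonneg fun ω => (Set.indicator_nonneg (fun _ _ => zero_le_one) ω).trans (hη ω)
  have htop : SL.E ξ ≠ ⊤ := (hc.trans_lt (EReal.coe_lt_top c)).ne
  have hbot : SL.E ξ ≠ ⊥ := ((EReal.bot_lt_coe 0).trans_le (hnn ξ hξ)).ne'
  have he := EReal.coe_toReal htop hbot
  refine le_trans ?_ (EReal.coe_le_coe_iff.1 (he.le.trans hc))
  refine csInf_le ⟨0, ?_⟩ ⟨ξ, hξ, he.symm⟩
  rintro y ⟨η, hη, hy⟩
  have h := hnn η hη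
  rw [hy] at h
  exact_mod_cast h

/-- Exponential moment bound for a truncated random variable with non-positive mean. -/
theorem E_exp_mul_min_le (SL : SublinearExp Ω) {Y : Ω → ℝ} (hY : SL.E Y ≤ 0) {b : ℝ}
    (hb : SL.E (fun ω => Y ω ^ 2) = b) {t x : ℝ} (ht : 0 < t) (hx : 0 < x) :
    SL.E (fun ω => Real.exp (t * min (Y ω) x)) ≤
      ((1 + (Real.exp (t * x) - 1) / x ^ 2 * b : ℝ) : EReal) := by
  set c := (Real.exp (t * x) - 1) / x ^ 2 with hc
  have hc0 : 0 ≤ c := div_nonneg (sub_nonneg.2 (Real.one_le_exp (by positivity))) (by positivity)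
  have hpt : ∀ ω, Real.exp (t * min (Y ω) x) ≤ 1 + (t * Y ω + c * Y ω ^ 2) := by
    intro ω
    have h := exp_le_one_add_add_sq (mul_pos ht hx)
      (mul_le_mul_of_nonneg_left (min_le_right (Y ω) x) ht.le)
    have he : (Real.exp (t * x) - 1) / (t * x) ^ 2 * (t * min (Y ω) x) ^ 2
        = c * min (Y ω) x ^ 2 := by
      rw [hc]; field_simp
    rw [he] at h
    have h1 : t * min (Y ω) x ≤ t * Y ω := mul_le_mul_of_nonneg_left (min_le_left _ _) ht.le
    have h2 : min (Y ω) x ^ 2 ≤ Y ω ^ 2 := by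
      rcases le_total (Y ω) x with h | h
      · rw [min_eq_left h]
      · rw [min_eq_right h]; exact pow_le_pow_left₀ hx.le h 2
    linarith [mul_le_mul_of_nonneg_left h2 hc0]
  have hlin : SL.E (fun ω => t * Y ω) ≤ 0 := by
    rw [SL.pos_homog t ht.le]
    exact mul_nonpos_of_nonneg_of_nonpos (EReal.coe_nonneg.2 ht.le) hY
  calc _ ≤ SL.E (fun ω => 1 + (t * Y ω + c * Y ω ^ 2)) := SL.mono _ _ hpt
    _ ≤ SL.E (fun _ => 1) + (SL.E (fun ω => t * Y ω) + SL.E (fun ω => c * Y ω ^ 2)) :=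
      (SL.subadd _ _).trans (add_le_add le_rfl (SL.subadd _ _))
    _ ≤ ((1 : ℝ) : EReal) + (0 + ((c * b : ℝ) : EReal)) := by
      refine add_le_add (SL.const_eq 1).le (add_le_add hlin ?_)
      rw [SL.pos_homog c hc0, hb, EReal.coe_mul]
    _ = _ := by rw [zero_add, ← EReal.coe_add]

/-- The Chebyshev-type bound with the variance sum replaced by a larger positive number. -/
theorem V_sum_ge_le_of_le (SL : SublinearExp Ω) {n : ℕ} {X : Fin n → Ω → ℝ} {K : ℝ} (hK : 0 ≤ K)
    (hX : SL.UENDFin K X) (hmean : ∀ k, SL.E (X k) ≤ 0) {b : Fin n → ℝ}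
    (hb : ∀ k, SL.E (fun ω => X k ω ^ 2) = b k) {D x : ℝ} (hD : 0 < D) (hbD : ∑ k, b k ≤ D)
    (hx : 0 < x) :
    SL.V {ω | x ≤ ∑ k, X k ω} ≤ (∑ k, b k) / x ^ 2 + K * Real.exp 1 * (D / x ^ 2) := by
  have hx2 : 0 < x ^ 2 := by positivity
  set t := Real.log (1 + x ^ 2 / D) / x with htdef
  have ht : 0 < t := div_pos (Real.log_pos (by linarith [div_pos hx2 hD])) hx
  have hexp : Real.exp (t * x) = 1 + x ^ 2 / D := by
    rw [htdef, div_mul_cancel₀ _ hx.ne', Real.exp_log (by positivity)]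
  have hc : (Real.exp (t * x) - 1) / x ^ 2 = 1 / D := by
    rw [hexp]; field_simp; ring
  have hfactor : ∀ k, (SL.E fun ω => Real.exp (t * min (X k ω) x)).toReal
      ≤ Real.exp (b k / D) := by
    intro k
    have h := SL.E_exp_mul_min_le (hmean k) (hb k) ht hx
    rw [hc] at h
    have h0 : 0 ≤ SL.E fun ω => Real.exp (t * min (X k ω) x) :=
      SL.E_nonneg fun ω => (Real.exp_pos _).le
    have h' := EReal.toReal_le_toReal h ((EReal.bot_lt_coe 0).trans_le h0).ne' (EReal.coe_ne_top _)
    rw [EReal.toReal_coe] at h'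
    have he : 1 / D * b k = b k / D := by ring
    linarith [Real.add_one_le_exp (b k / D)]
  have hprod : SL.E (fun ω => ∏ k, Real.exp (t * min (X k ω) x))
      ≤ ((K * Real.exp 1 : ℝ) : EReal) := by
    refine (hX (fun _ u => Real.exp (t * min u x)) (fun _ => isBLip_exp_mul_min ht.le)
      (fun _ u v huv => Real.exp_le_exp.2
        (mul_le_mul_of_nonneg_left (min_le_min_right x huv) ht.le))
      (fun _ _ => (Real.exp_pos _).le)).trans (EReal.coe_le_coe_iff.2 ?_)
    refine mul_le_mul_of_nonneg_left ?_ hK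
    calc _ ≤ ∏ k, Real.exp (b k / D) :=
          Finset.prod_le_prod (fun k _ => EReal.toReal_nonneg
            (SL.E_nonneg fun ω => (Real.exp_pos _).le)) (fun k _ => hfactor k)
      _ = Real.exp ((∑ k, b k) / D) := by rw [← Real.exp_sum, Finset.sum_div]
      _ ≤ Real.exp 1 := Real.exp_le_exp.2 ((div_le_one hD).2 hbD)
  have hsq : SL.E (fun ω => ∑ k, X k ω ^ 2) ≤ ((∑ k, b k : ℝ) : EReal) := by
    refine (SL.E_sum_le Finset.univ fun k ω => X k ω ^ 2).trans (le_of_eq ?_)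
    simp only [hb, coe_finset_sum]
  have hdecay : Real.exp (-(t * x)) ≤ D / x ^ 2 := by
    rw [Real.exp_neg, hexp, inv_le_comm₀ (by positivity) (by positivity), inv_div]
    linarith
  refine SL.V_le (ξ := fun ω => (x ^ 2)⁻¹ * ∑ k, X k ω ^ 2
    + Real.exp (-(t * x)) * ∏ k, Real.exp (t * min (X k ω) x)) (fun ω => ?_) ?_
  · have hA : 0 ≤ (x ^ 2)⁻¹ * ∑ k, X k ω ^ 2 := by positivity
    have hP : 0 ≤ Real.exp (-(t * x)) * ∏ k, Real.exp (t * min (X k ω) x) := by positivity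
    by_cases hω : ω ∈ {ω | x ≤ ∑ k, X k ω}
    swap
    · rw [Set.indicator_of_notMem hω]
      exact add_nonneg hA hP
    rw [Set.indicator_of_mem hω]
    rcases em (∃ k, x < X k ω) with ⟨k, hk⟩ | hsmall
    · have h1 : x ^ 2 ≤ ∑ k, X k ω ^ 2 := (pow_le_pow_left₀ hx.le hk.le 2).trans
        (Finset.single_le_sum (f := fun k => X k ω ^ 2) (fun _ _ => sq_nonneg _)
          (Finset.mem_univ k))
      have h2 : 1 ≤ (x ^ 2)⁻¹ * ∑ k, X k ω ^ 2 := by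
        rw [inv_mul_eq_div]; exact (one_le_div hx2).2 h1
      exact h2.trans (le_add_of_nonneg_right hP)
    · push Not at hsmall
      have h1 : 1 ≤ Real.exp (-(t * x)) * ∏ k, Real.exp (t * min (X k ω) x) := by
        simp only [fun k => min_eq_left (hsmall k)]
        rw [← Real.exp_sum, ← Real.exp_add, ← Finset.mul_sum]
        refine Real.one_le_exp ?_
        linarith [mul_le_mul_of_nonneg_left (show x ≤ ∑ k, X k ω from hω) ht.le]
      exact h1.trans (le_add_of_nonneg_left hA)
  · calc _ ≤ _ := SL.subadd _ _
      _ ≤ ((x ^ 2)⁻¹ : ℝ) * ((∑ k, b k : ℝ) : EReal)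
          + (Real.exp (-(t * x)) : ℝ) * ((K * Real.exp 1 : ℝ) : EReal) := by
        rw [SL.pos_homog _ (by positivity), SL.pos_homog _ (by positivity)]
        exact add_le_add
          (mul_le_mul_of_nonneg_left hsq (EReal.coe_nonneg.2 (by positivity)))
          (mul_le_mul_of_nonneg_left hprod (EReal.coe_nonneg.2 (by positivity)))
      _ ≤ _ := by
        rw [← EReal.coe_mul, ← EReal.coe_mul, ← EReal.coe_add, EReal.coe_le_coe_iff,
          inv_mul_eq_div, mul_comm (Real.exp (-(t * x)))]
        gcongr

end SublinearExp

/-- Theorem 3.1(c), inequality (3.5): Chebyshev-type inequality. -/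
theorem stmt4 {Ω : Type} (SL : SublinearExp Ω) (n : ℕ) (X : Fin n → Ω → ℝ)
    (K : ℝ) (hK : 1 ≤ K)
    (hUEND : SublinearExp.UENDFin SL K X)
    (hmean : ∀ k, SL.E (X k) ≤ 0)
    (B : ℝ) (hB : (B : EReal) = ∑ k, SL.E fun ω => (X k ω) ^ 2) :
    ∀ x : ℝ, 0 < x →
      SL.V {ω | x ≤ ∑ k, X k ω} ≤ (1 + K * Real.exp 1) * (B / x ^ 2) := by
  intro x hx
  have hnn : ∀ k, 0 ≤ SL.E fun ω => X k ω ^ 2 := fun k => SL.E_nonneg fun ω => sq_nonneg _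
  have hfin : ∀ k, SL.E (fun ω => X k ω ^ 2) ≠ ⊤ := fun k =>
    ((Finset.single_le_sum (fun k _ => hnn k) (Finset.mem_univ k)).trans_lt
      (hB ▸ EReal.coe_lt_top B)).ne
  have hb : ∀ k, SL.E (fun ω => X k ω ^ 2) = ((SL.E fun ω => X k ω ^ 2).toReal : EReal) :=
    fun k => (EReal.coe_toReal (hfin k) ((EReal.bot_lt_coe 0).trans_le (hnn k)).ne').symm
  set b : Fin n → ℝ := fun k => (SL.E fun ω => X k ω ^ 2).toReal
  have hBsum : B = ∑ k, b k := by
    rw [Finset.sum_congr rfl fun k _ => hb k] at hB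
    rwa [← SublinearExp.coe_finset_sum, EReal.coe_eq_coe_iff] at hB
  have hB0 : 0 ≤ B := hBsum ▸ Finset.sum_nonneg fun k _ => EReal.toReal_nonneg (hnn k)
  have hlim : Tendsto (fun D : ℝ => B / x ^ 2 + K * Real.exp 1 * (D / x ^ 2))
      (nhdsWithin B (Set.Ioi B)) (nhds (B / x ^ 2 + K * Real.exp 1 * (B / x ^ 2))) :=
    (Continuous.tendsto (by fun_prop) B).mono_left nhdsWithin_le_nhds
  refine (ge_of_tendsto hlim ?_).trans (le_of_eq (by ring))
  filter_upwards [self_mem_nhdsWithin] with D hD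
  have h := SL.V_sum_ge_le_of_le (zero_le_one.trans hK) hUEND hmean hb (hB0.trans_lt hD)
    (hBsum ▸ (le_of_lt hD)) hx
  rwa [← hBsum] at h
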